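/- Let x be a positive rational with continued fraction expansion x = [a_0, a_1, …, a_m] (a_0 ≥ 0, a_j ≥ 1 for j ≥ 1, a_m ≥ 2 when m ≥ 1). Then the limit distribution function of the Calkin–Wilf tree satisfies F(x) = 1 − 2^(−a_0) + 2^(−(a_0+a_1)) − 2^(−(a_0+a_1+a_2)) + ⋯, i.e. F(x) = 1 + Σ_{k=0}^{m} (−1)^{k+1} · 2^(−(a_0 + a_1 + ⋯ + a_k)). -/

import Mathlib

open Filter

/-- The generations of the Calkin–Wilf tree: `CW 0 = [1/1]` is the first
generation, and each generation is obtained from the previous one by replacing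
each entry `x` by `x/(x+1)` and `x+1`, in this order.  Thus the `n`-th
generation of the paper is `CW (n-1)`. -/
def CW : ℕ → List ℚ
  | 0 => [1]
  | n + 1 => (CW n).flatMap (fun x => [x / (x + 1), x + 1])

open scoped Classical in
/-- `Fcw n` is the distribution function of the `(n+1)`-st generation of the
Calkin–Wilf tree: `Fcw (n-1) x = F_n(x) = 2^(1-n) · #{j : x_j^(n) ≤ x}`. -/
noncomputable def Fcw (n : ℕ) (x : ℝ) : ℝ :=
  ((CW n).countP (fun q => decide ((q : ℝ) ≤ x))) / 2 ^ n

/-- The value of the finite continued fraction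
`[a₀, a₁, …, a_m] = a₀ + 1/(a₁ + 1/(⋯ + 1/a_m))`, given as the list
`[a₀, a₁, …, a_m]` of its partial quotients. -/
def cfVal : List ℕ → ℚ
  | [] => 0
  | [a] => (a : ℚ)
  | a :: l => (a : ℚ) + (cfVal l)⁻¹

/-
Inversion carries the children `q/(q+1)` and `q+1` of `q` to the children `q⁻¹+1` and
`q⁻¹/(q⁻¹+1)` of `q⁻¹`, so each generation is invariant under inversion; as its entries are
distinct, the mass of a single point vanishes in the limit. Hence `F(x⁻¹) = 1 - F(x)` for `x > 0`.
In each generation one half of the entries lies below `1` and the other half is the previous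
generation shifted by `1`, which gives `F(x + 1) = (1 + F(x))/2`. Together,
`F(a + x⁻¹) = 1 - 2⁻ᵃ F(x)`, and this recursion unwinds the continued fraction.
-/

open scoped List in
theorem CW_succ_perm (n : ℕ) :
    CW (n + 1) ~ (CW n).map (fun q => q / (q + 1)) ++ (CW n).map (· + 1) := by
  have h := List.map_append_flatMap_perm (CW n) (fun q => q / (q + 1)) (fun q => [q + 1])
  rw [← List.map_eq_flatMap] at h
  exact h.symm

theorem length_CW (n : ℕ) : (CW n).length = 2 ^ n := by
  induction n with
  | zero => rfl
  | succ n ih =>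
    rw [(CW_succ_perm n).length_eq, List.length_append, List.length_map, List.length_map, ih]
    ring

theorem pos_of_mem_CW {n : ℕ} {q : ℚ} (hq : q ∈ CW n) : 0 < q := by
  induction n generalizing q with
  | zero => simp_all [CW]
  | succ n ih =>
    rw [(CW_succ_perm n).mem_iff, List.mem_append, List.mem_map, List.mem_map] at hq
    rcases hq with ⟨p, hp, rfl⟩ | ⟨p, hp, rfl⟩ <;> have := ih hp <;> positivity

theorem nodup_CW (n : ℕ) : (CW n).Nodup := by
  induction n with
  | zero => exact List.nodup_singleton 1
  | succ n ih =>
    rw [(CW_succ_perm n).nodup_iff]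
    refine (ih.map_on ?_).append (ih.map (add_left_injective 1)) ?_
    · intro p hp q hq hpq
      have := pos_of_mem_CW hp
      have := pos_of_mem_CW hq
      rw [div_eq_div_iff (by positivity) (by positivity)] at hpq
      linarith
    · intro r hleft hright
      obtain ⟨p, hp, rfl⟩ := List.mem_map.1 hleft
      obtain ⟨q, hq, hqp⟩ := List.mem_map.1 hright
      have hp := pos_of_mem_CW hp
      have hq := pos_of_mem_CW hq
      have : p / (p + 1) < 1 := (div_lt_one (by positivity)).2 (lt_add_one p)
      linarith

open scoped List in
theorem map_inv_CW_perm (n : ℕ) : (CW n).map (·⁻¹) ~ CW n := by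
  induction n with
  | zero => simp [CW]
  | succ n ih =>
    have inv_left : (CW n).map (fun q => (q / (q + 1))⁻¹) = ((CW n).map (·⁻¹)).map (· + 1) := by
      rw [List.map_map]
      refine List.map_congr_left fun q hq => ?_
      have := pos_of_mem_CW hq
      simp only [Function.comp_apply]
      field_simp
      ring
    have inv_right : (CW n).map (fun q => (q + 1)⁻¹) =
        ((CW n).map (·⁻¹)).map (fun q => q / (q + 1)) := by
      rw [List.map_map]
      refine List.map_congr_left fun q hq => ?_
      have := pos_of_mem_CW hq
      simp only [Function.comp_apply]
      field_simp
      ring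
    calc (CW (n + 1)).map (·⁻¹)
        ~ ((CW n).map (fun q => q / (q + 1)) ++ (CW n).map (· + 1)).map (·⁻¹) :=
          (CW_succ_perm n).map _
      _ = ((CW n).map (·⁻¹)).map (· + 1) ++ ((CW n).map (·⁻¹)).map (fun q => q / (q + 1)) := by
          rw [← inv_left, ← inv_right, List.map_append, List.map_map, List.map_map]
          rfl
      _ ~ (CW n).map (· + 1) ++ (CW n).map (fun q => q / (q + 1)) :=
          (ih.map _).append (ih.map _)
      _ ~ CW (n + 1) := List.perm_append_comm.trans (CW_succ_perm n).symm

theorem countP_le_add_countP_ge {α : Type*} [LinearOrder α] (l : List α) (x : α) :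
    l.countP (· ≤ x) + l.countP (x ≤ ·) = l.length + l.count x := by
  induction l with
  | nil => rfl
  | cons y l ih =>
    rw [List.countP_cons, List.countP_cons, List.count_cons, List.length_cons]
    rcases lt_trichotomy y x with h | rfl | h
    · simp only [h.le, h.not_ge, h.ne, beq_iff_eq, decide_true, decide_false, if_true, if_false,
        Bool.false_eq_true]
      omega
    · simp only [le_rfl, beq_self_eq_true, decide_true, if_true]
      omega
    · simp only [h.le, h.not_ge, h.ne', beq_iff_eq, decide_true, decide_false, if_true, if_false,
        Bool.false_eq_true]
      omega

-- In the definition of `Fcw` the list `CW n` itself is coerced, monadically, to a list of reals.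
theorem Fcw_eq_countP (n : ℕ) (x : ℝ) :
    Fcw n x = (CW n).countP (fun q : ℚ => (q : ℝ) ≤ x) / 2 ^ n := by
  have hcast : (do let q ← CW n; pure (q : ℝ) : List ℝ) = (CW n).map ((↑) : ℚ → ℝ) := by
    simp [List.map_eq_flatMap, List.bind_eq_flatMap, List.pure_def]
  rw [Fcw, hcast, List.countP_map]
  rfl

theorem Fcw_apply_zero (n : ℕ) : Fcw n 0 = 0 := by
  have hcount : (CW n).countP (fun q : ℚ => (q : ℝ) ≤ 0) = 0 := by
    simpa [List.countP_eq_zero] using fun q hq => pos_of_mem_CW hq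
  rw [Fcw_eq_countP, hcount, Nat.cast_zero, zero_div]

theorem Fcw_succ_add_one (n : ℕ) {x : ℝ} (hx : 0 ≤ x) :
    Fcw (n + 1) (x + 1) = (1 + Fcw n x) / 2 := by
  have left_children : (CW n).countP (fun q => ((q / (q + 1) : ℚ) : ℝ) ≤ x + 1) = 2 ^ n := by
    rw [← length_CW, List.countP_eq_length]
    intro q hq
    have hq := pos_of_mem_CW hq
    have hlt : ((q / (q + 1) : ℚ) : ℝ) < 1 := by
      exact_mod_cast (div_lt_one (by positivity)).2 (lt_add_one q)
    exact decide_eq_true (by linarith)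
  have right_children : (CW n).countP (fun q => ((q + 1 : ℚ) : ℝ) ≤ x + 1) =
      (CW n).countP (fun q : ℚ => (q : ℝ) ≤ x) := by
    simp
  have hcount : (CW (n + 1)).countP (fun q : ℚ => (q : ℝ) ≤ x + 1) =
      2 ^ n + (CW n).countP (fun q : ℚ => (q : ℝ) ≤ x) := by
    rw [(CW_succ_perm n).countP_eq, List.countP_append, List.countP_map, List.countP_map,
      ← left_children, ← right_children]
    rfl
  rw [Fcw_eq_countP, Fcw_eq_countP, hcount, pow_succ]
  push_cast
  field_simp

theorem Fcw_inv_add_Fcw (n : ℕ) {x : ℝ} (hx : 0 < x) :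
    Fcw n x⁻¹ + Fcw n x = 1 + ((CW n).map ((↑) : ℚ → ℝ)).count x / 2 ^ n := by
  have hinv : (CW n).countP (fun q : ℚ => (q : ℝ) ≤ x⁻¹) =
      (CW n).countP (fun q : ℚ => x ≤ (q : ℝ)) := by
    rw [← (map_inv_CW_perm n).countP_eq, List.countP_map]
    refine List.countP_congr fun q hq => ?_
    have hq : (0 : ℝ) < q := by exact_mod_cast pos_of_mem_CW hq
    simp [inv_le_inv₀ hq hx]
  have hcount :
      (CW n).countP (fun q : ℚ => x ≤ (q : ℝ)) + (CW n).countP (fun q : ℚ => (q : ℝ) ≤ x) =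
        2 ^ n + ((CW n).map ((↑) : ℚ → ℝ)).count x := by
    have h := countP_le_add_countP_ge ((CW n).map ((↑) : ℚ → ℝ)) x
    rwa [List.countP_map, List.countP_map, List.length_map, length_CW, add_comm] at h
  rw [Fcw_eq_countP, Fcw_eq_countP, hinv, ← add_div, ← Nat.cast_add, hcount]
  push_cast
  field_simp

theorem tendsto_count_CW_div (x : ℝ) :
    Tendsto (fun n => (((CW n).map ((↑) : ℚ → ℝ)).count x : ℝ) / 2 ^ n) atTop (nhds 0) := by
  have hpow : Tendsto (fun n : ℕ => 1 / (2 : ℝ) ^ n) atTop (nhds 0) := by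
    simpa using tendsto_pow_atTop_nhds_zero_of_lt_one (r := (2⁻¹ : ℝ)) (by norm_num) (by norm_num)
  refine squeeze_zero (fun n => by positivity) (fun n => ?_) hpow
  have hcount := List.nodup_iff_count_le_one.1 ((nodup_CW n).map Rat.cast_injective) x
  gcongr
  exact_mod_cast hcount

/-- `F` is the limit distribution function of the Calkin–Wilf tree. Only its values on `[0, ∞)`
are constrained. -/
def IsCWLimit (F : ℝ → ℝ) : Prop :=
  ∀ x : ℝ, 0 ≤ x → Tendsto (fun n => Fcw n x) atTop (nhds (F x))

namespace IsCWLimit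

variable {F : ℝ → ℝ}

theorem apply_zero (hF : IsCWLimit F) : F 0 = 0 :=
  tendsto_nhds_unique (hF 0 le_rfl) (by simp only [Fcw_apply_zero, tendsto_const_nhds])

theorem apply_add_one (hF : IsCWLimit F) {x : ℝ} (hx : 0 ≤ x) : F (x + 1) = (1 + F x) / 2 := by
  have h := (tendsto_add_atTop_iff_nat 1).2 (hF (x + 1) (by positivity))
  simp only [Fcw_succ_add_one _ hx] at h
  exact tendsto_nhds_unique h (((hF x hx).const_add 1).div_const 2)

theorem apply_inv (hF : IsCWLimit F) {x : ℝ} (hx : 0 < x) : F x⁻¹ = 1 - F x := by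
  have h := (hF x⁻¹ (by positivity)).add (hF x hx.le)
  simp only [Fcw_inv_add_Fcw _ hx] at h
  have hsum := tendsto_nhds_unique h ((tendsto_count_CW_div x).const_add 1)
  linarith

theorem apply_natCast_add (hF : IsCWLimit F) (a : ℕ) {x : ℝ} (hx : 0 ≤ x) :
    F (a + x) = 1 - (1 - F x) / 2 ^ a := by
  induction a with
  | zero => simp
  | succ a ih =>
    rw [Nat.cast_succ, add_right_comm, hF.apply_add_one (by positivity), ih, pow_succ]
    field_simp
    ring

theorem apply_natCast_add_inv (hF : IsCWLimit F) (a : ℕ) {x : ℝ} (hx : 0 < x) :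
    F (a + x⁻¹) = 1 - F x / 2 ^ a := by
  rw [hF.apply_natCast_add a (by positivity), hF.apply_inv hx, sub_sub_cancel]

end IsCWLimit

theorem cfVal_cons {l : List ℕ} (a : ℕ) (hl : l ≠ []) : cfVal (a :: l) = a + (cfVal l)⁻¹ := by
  cases l with
  | nil => exact absurd rfl hl
  | cons b l => rfl

theorem cfVal_pos {l : List ℕ} (hl : l ≠ []) (hlast : 1 ≤ l.getLast hl) : 0 < cfVal l := by
  induction l with
  | nil => exact absurd rfl hl
  | cons a l ih =>
    rcases eq_or_ne l [] with rfl | hne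
    · exact Nat.cast_pos.2 hlast
    · rw [List.getLast_cons hne] at hlast
      have := ih hne hlast
      rw [cfVal_cons a hne]
      positivity

/-- The sum `1 - 2^(-a₀) + 2^(-(a₀+a₁)) - ⋯` attached to the partial quotients `[a₀, a₁, …]`,
which is the value of the limit distribution function at `[a₀, a₁, …]`. -/
noncomputable def altDyadicSum (A : List ℕ) : ℝ :=
  1 + ∑ k ∈ Finset.range A.length, (-1 : ℝ) ^ (k + 1) * 2 ^ (-((A.take (k + 1)).sum : ℤ))

theorem altDyadicSum_nil : altDyadicSum [] = 1 := by
  simp [altDyadicSum]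

theorem altDyadicSum_cons (a : ℕ) (l : List ℕ) :
    altDyadicSum (a :: l) = 1 - altDyadicSum l / 2 ^ a := by
  have hhead : (-1 : ℝ) ^ (0 + 1) * 2 ^ (-(((a :: l).take (0 + 1)).sum : ℤ)) = -(1 / 2 ^ a) := by
    simp
  have htail (k : ℕ) :
      (-1 : ℝ) ^ (k + 1 + 1) * 2 ^ (-(((a :: l).take (k + 1 + 1)).sum : ℤ)) =
        -((-1 : ℝ) ^ (k + 1) * 2 ^ (-((l.take (k + 1)).sum : ℤ)) / 2 ^ a) := by
    rw [List.take_succ_cons, List.sum_cons, Nat.cast_add, neg_add, zpow_add₀ two_ne_zero,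
      zpow_neg, zpow_natCast, pow_succ (-1 : ℝ) (k + 1)]
    ring
  rw [altDyadicSum, altDyadicSum, List.length_cons, Finset.sum_range_succ', hhead]
  simp only [htail, Finset.sum_neg_distrib, ← Finset.sum_div]
  ring

theorem calkin_wilf_limit_distribution_at_rationals_general {F : ℝ → ℝ} (hF : IsCWLimit F)
    {A : List ℕ} (hA : A ≠ []) (hlast : 2 ≤ A.length → 1 ≤ A.getLast hA) :
    F (cfVal A : ℝ) = 1 + ∑ k ∈ Finset.range A.length,
      (-1 : ℝ) ^ (k + 1) * 2 ^ (-((A.take (k + 1)).sum : ℤ)) := by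
  change F (cfVal A : ℝ) = altDyadicSum A
  induction A with
  | nil => exact absurd rfl hA
  | cons a l ih =>
    rw [altDyadicSum_cons]
    rcases eq_or_ne l [] with rfl | hl
    · simpa [cfVal, altDyadicSum_nil, hF.apply_zero] using hF.apply_natCast_add a le_rfl
    · have hlast_tail : 1 ≤ l.getLast hl := by
        rw [← List.getLast_cons hl]
        exact hlast (Nat.succ_le_succ (List.length_pos_of_ne_nil hl))
      have hpos : (0 : ℝ) < cfVal l := by exact_mod_cast cfVal_pos hl hlast_tail
      rw [cfVal_cons a hl, ← ih hl fun _ => hlast_tail, ← hF.apply_natCast_add_inv a hpos]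
      push_cast
      rfl

/-- For a positive rational `x` with continued fraction expansion
`x = [a₀, a₁, …, a_m]` (`a₀ ≥ 0`, `a_j ≥ 1` for `j ≥ 1`, `a_m ≥ 2` when
`m ≥ 1`), the limit distribution function `F` of the Calkin–Wilf tree satisfies
`F(x) = 1 − 2^(−a₀) + 2^(−(a₀+a₁)) − 2^(−(a₀+a₁+a₂)) + ⋯`, i.e.
`F(x) = 1 + ∑_{k=0}^{m} (−1)^(k+1) · 2^(−(a₀+⋯+a_k))`. -/
theorem calkin_wilf_limit_distribution_at_rationals (F : ℝ → ℝ)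
    (hF : ∀ x : ℝ, 0 ≤ x → Tendsto (fun n => Fcw n x) atTop (nhds (F x)))
    (A : List ℕ) (hA : A ≠ []) (hAtail : ∀ a ∈ A.tail, 1 ≤ a)
    (hAlast : 2 ≤ A.length → 2 ≤ A.getLast hA)
    (x : ℚ) (hx : 0 < x) (hxA : x = cfVal A) :
    F (x : ℝ) = 1 + ∑ k ∈ Finset.range A.length,
      (-1 : ℝ) ^ (k + 1) * 2 ^ (-(((A.take (k + 1)).sum : ℤ))) := by
  rw [hxA]
  exact calkin_wilf_limit_distribution_at_rationals_general hF hA fun h =>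
    one_le_two.trans (hAlast h)
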